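/- (Asymptotic uniqueness of the ς-reduced representative along rays of direction (−1,0).) Assume 0 ≤ a11 < a21, 0 ≤ a12 < a32, 0 ≤ a22 < a32, and fix integers m, n. Suppose that for every integer t ≥ 0 the matrix H(m−t, n) has characteristic polynomial irreducible over ℚ and has a non-real complex eigenvalue. Then there exists T such that for every integer t > T any two ς-reduced matrices integer conjugate to H(m−t, n) are equal; i.e., H(m−t,n) has exactly one integer conjugate ς-reduced matrix. -/

import Mathlib

/-- 3×3 integer matrices. -/
abbrev M3 : Type := Matrix (Fin 3) (Fin 3) ℤ

/-- Hessenberg complexity ς(M) = a21² · a32. -/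
def HessComplexity (M : M3) : ℤ := (M 1 0) ^ 2 * (M 2 1)

/-- A perfect (upper) Hessenberg matrix: a31 = 0, 0 ≤ a11 < a21, 0 ≤ a12 < a32,
0 ≤ a22 < a32. -/
def IsPerfectHessenberg (M : M3) : Prop :=
  M 2 0 = 0 ∧
  0 ≤ M 0 0 ∧ M 0 0 < M 1 0 ∧
  0 ≤ M 0 1 ∧ M 0 1 < M 2 1 ∧
  0 ≤ M 1 1 ∧ M 1 1 < M 2 1

/-- M₂ = X · M₁ · X⁻¹ for some X ∈ GL(3,ℤ). -/
def IntegerConjugate (M₁ M₂ : M3) : Prop :=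
  ∃ X : M3, (X.det = 1 ∨ X.det = -1) ∧ M₂ = X * M₁ * X⁻¹

/-- A ς-reduced matrix: a perfect Hessenberg SL(3,ℤ)-matrix whose Hessenberg
complexity is minimal in its integer conjugacy class. -/
def SigmaReduced (M : M3) : Prop :=
  M.det = 1 ∧ IsPerfectHessenberg M ∧
  ∀ M' : M3, M'.det = 1 → IsPerfectHessenberg M' → IntegerConjugate M M' →
    HessComplexity M ≤ HessComplexity M'

/-- The family H(m,n) of matrices of Hessenberg type ⟨a11,a21|a12,a22,a32⟩. -/
def Hmat (a11 a12 a13 a21 a22 a23 a32 a33 m n : ℤ) : M3 :=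
  !![a11, a12, a11 * m + a12 * n + a13;
     a21, a22, a21 * m + a22 * n + a23;
     0,   a32, a32 * n + a33]

/-!
For `v ∈ ℤ³` consider the form `F_M(v) = det (v, M v, M² v)`. If `M Y = Y M'` with `det Y = ±1` and
`M'` Hessenberg, then `F_M(Y e₁) = ± ς(M')`, and a perfect Hessenberg matrix is recovered from the
line `ℤ Y e₁`. So it suffices that on vectors with `0 < |F_M(v)| ≤ ς(M)` every orbit under `M`
meets `ℤ e₁`.

In the coordinates `w = (e₃ᵀ v, e₃ᵀ M v, e₃ᵀ M² v)` the matrix `M` becomes the companion matrix of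
its characteristic polynomial `X³ - τ X² + σ X - 1`, the line `ℤ e₁` becomes `w₀ = w₁ = 0`, and
the bound on the form becomes `(a₂₁ a₃₂)³`, which like `τ` is constant along the ray, while
`σ → ∞`. For large `σ` the polynomial factors as `(X - c⁻¹) (X² - b X + c)` with `c` large and
`b² ≤ c`, and the form factors as `-L Q` with `L` linear and `Q` a positive semidefinite quadratic
form. As `M` scales `L` by `c⁻¹`, every orbit has a point with `1/4 ≤ |L| < c/4`. There `Q` is
bounded by a small multiple of `c`, which for an integer point forces `w₀ = w₁ = 0`.
-/

section

open Matrix Filter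

section Krylov

variable {n : ℕ} {R S : Type*} [CommRing R] [CommRing S]

/-- The Krylov matrix of `A` and `v`: its columns are `v, A v, A² v, …, Aⁿ⁻¹ v`. -/
def krylovMatrix (A : Matrix (Fin n) (Fin n) R) (v : Fin n → R) : Matrix (Fin n) (Fin n) R :=
  .of fun i j => (A ^ (j : ℕ) *ᵥ v) i

lemma krylovMatrix_mulVec {A B Y : Matrix (Fin n) (Fin n) R} (h : A * Y = Y * B) (v : Fin n → R) :
    krylovMatrix A (Y *ᵥ v) = Y * krylovMatrix B v := by
  ext i j
  have hpow : A ^ (j : ℕ) * Y = Y * B ^ (j : ℕ) :=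
    (SemiconjBy.pow_right (show SemiconjBy Y B A from h.symm) j).eq.symm
  simp only [krylovMatrix, of_apply, mulVec_mulVec, hpow]
  rw [← mulVec_mulVec]
  rfl

lemma det_krylovMatrix_mulVec {A B Y : Matrix (Fin n) (Fin n) R} (h : A * Y = Y * B)
    (v : Fin n → R) : (krylovMatrix A (Y *ᵥ v)).det = Y.det * (krylovMatrix B v).det := by
  rw [krylovMatrix_mulVec h, det_mul]

lemma krylovMatrix_map (f : R →+* S) (A : Matrix (Fin n) (Fin n) R) (v : Fin n → R) :
    krylovMatrix (A.map f) (f ∘ v) = (krylovMatrix A v).map f := by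
  ext i j
  simp only [krylovMatrix, of_apply, map_apply, RingHom.map_mulVec, Matrix.map_pow]

end Krylov

lemma apply_zpow_mulVec {n R K : Type*} [Fintype n] [DecidableEq n] [CommRing R] [GroupWithZero K]
    {A : Matrix n n R} (hA : IsUnit A.det) {μ : K} (hμ : μ ≠ 0) {f : (n → R) → K}
    (hf : ∀ v, f (A *ᵥ v) = μ * f v) (k : ℤ) (v : n → R) : f (A ^ k *ᵥ v) = μ ^ k * f v := by
  induction k generalizing v with
  | zero => simp
  | succ i ih => rw [zpow_add_one hA, ← mulVec_mulVec, ih, hf, zpow_add_one₀ hμ, mul_assoc]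
  | pred i ih =>
    have hinv : f v = μ * f (A⁻¹ *ᵥ v) := by
      rw [← hf, mulVec_mulVec, A.mul_nonsing_inv hA, one_mulVec]
    rw [zpow_sub_one hA, ← mulVec_mulVec, ih, zpow_sub_one₀ hμ, hinv, mul_assoc,
      inv_mul_cancel_left₀ hμ]

section Companion

variable {R S : Type*} [CommRing R] [CommRing S]

/-- The companion matrix of `X³ - τ X² + σ X - 1`, acting on columns `(h₀, h₁, h₂)` by shifting the
recurrence `h₃ = τ h₂ - σ h₁ + h₀`. -/
def cubicCompanion (σ τ : R) : Matrix (Fin 3) (Fin 3) R :=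
  !![0, 1, 0; 0, 0, 1; 1, -σ, τ]

lemma cubicCompanion_map (f : R →+* S) (σ τ : R) :
    (cubicCompanion σ τ).map f = cubicCompanion (f σ) (f τ) := by
  ext i j
  fin_cases i <;> fin_cases j <;> simp [cubicCompanion]

lemma det_cubicCompanion (σ τ : R) : (cubicCompanion σ τ).det = 1 := by
  simp [cubicCompanion, det_fin_three]

lemma cubicCompanion_mulVec (σ τ : R) (w : Fin 3 → R) :
    cubicCompanion σ τ *ᵥ w = ![w 1, w 2, w 0 - σ * w 1 + τ * w 2] := by
  ext i
  fin_cases i <;> simp [cubicCompanion, mulVec, dotProduct, Fin.sum_univ_three, sub_eq_add_neg]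

/-- The linear factor of `det (w, C w, C² w)`, where `C` is the companion matrix of
`(X - μ) (X² - b X + c)`: the left eigenvector of `C` for `μ`. -/
def linearFactor (b c : R) (w : Fin 3 → R) : R :=
  w 2 - b * w 1 + c * w 0

/-- The quadratic factor of `det (w, C w, C² w)`, where `C` is the companion matrix of
`(X - μ) (X² - b X + c)`. -/
def quadraticFactor (μ b c : R) (w : Fin 3 → R) : R :=
  (w 2 - μ * w 1) ^ 2 - b * (w 1 - μ * w 0) * (w 2 - μ * w 1) + c * (w 1 - μ * w 0) ^ 2

variable {σ τ : R} {μ b c : S}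

lemma det_krylovMatrix_cubicCompanion (hcμ : c * μ = 1) (w : Fin 3 → S) :
    (krylovMatrix (cubicCompanion (c + b * μ) (b + μ)) w).det =
      -(linearFactor b c w * quadraticFactor μ b c w) := by
  have hC : ∀ v, cubicCompanion (c + b * μ) (b + μ) *ᵥ v =
      ![v 1, v 2, c * μ * v 0 - (c + b * μ) * v 1 + (b + μ) * v 2] := by
    intro v
    rw [cubicCompanion_mulVec, hcμ, one_mul]
  simp only [det_fin_three, krylovMatrix, of_apply, Fin.val_zero, Fin.val_one, Fin.val_two,
    pow_zero, pow_one, one_mulVec, pow_two, ← mulVec_mulVec, hC, cons_val, linearFactor,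
    quadraticFactor]
  ring

lemma map_det_krylovMatrix_cubicCompanion (f : R →+* S) (hcμ : c * μ = 1)
    (hσ : f σ = c + b * μ) (hτ : f τ = b + μ) (w : Fin 3 → R) :
    f (krylovMatrix (cubicCompanion σ τ) w).det =
      -(linearFactor b c (f ∘ w) * quadraticFactor μ b c (f ∘ w)) := by
  rw [← det_krylovMatrix_cubicCompanion hcμ, ← hσ, ← hτ, ← cubicCompanion_map, krylovMatrix_map]
  exact f.map_det _

lemma linearFactor_map_cubicCompanion_mulVec (f : R →+* S) (hcμ : c * μ = 1)
    (hσ : f σ = c + b * μ) (hτ : f τ = b + μ) (w : Fin 3 → R) :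
    linearFactor b c (f ∘ (cubicCompanion σ τ *ᵥ w)) = μ * linearFactor b c (f ∘ w) := by
  simp only [cubicCompanion_mulVec, linearFactor, Function.comp_apply, cons_val, map_add, map_sub,
    map_mul, hσ, hτ]
  linear_combination -(f (w 0)) * hcμ

end Companion

section ThirdRow

variable {R : Type*} [CommRing R]

lemma pow_three_eq_trace_adjugate_det (A : Matrix (Fin 3) (Fin 3) R) :
    A ^ 3 = A.trace • A ^ 2 - A.adjugate.trace • A + A.det • 1 := by
  ext i j
  fin_cases i <;> fin_cases j <;>
    simp [pow_succ, mul_apply, Fin.sum_univ_three, trace_fin_three, adjugate_fin_three,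
      det_fin_three] <;> ring

/-- The matrix with rows `e₃ᵀ, e₃ᵀ M, e₃ᵀ M²`, which conjugates `M` to its companion matrix. -/
def thirdRowKrylov (M : Matrix (Fin 3) (Fin 3) R) : Matrix (Fin 3) (Fin 3) R :=
  .of fun i => (M ^ (i : ℕ)) 2

lemma cubicCompanion_mul_thirdRowKrylov {M : Matrix (Fin 3) (Fin 3) R} (hdet : M.det = 1) :
    cubicCompanion M.adjugate.trace M.trace * thirdRowKrylov M = thirdRowKrylov M * M := by
  have hrow : ∀ i j, (thirdRowKrylov M * M) i j = (M ^ (i + 1 : ℕ)) 2 j := by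
    intro i j
    rw [pow_succ]
    rfl
  ext i j
  rw [hrow]
  fin_cases i
  · simp [thirdRowKrylov, cubicCompanion, mul_apply, Fin.sum_univ_three]
  · simp [thirdRowKrylov, cubicCompanion, mul_apply, Fin.sum_univ_three]
  · have hCH := congrFun (congrFun (pow_three_eq_trace_adjugate_det M) 2) j
    simp only [hdet, one_smul, Matrix.add_apply, Matrix.sub_apply, Matrix.smul_apply,
      smul_eq_mul] at hCH
    have hlast : (cubicCompanion M.adjugate.trace M.trace * thirdRowKrylov M) 2 j =
        (1 : Matrix (Fin 3) (Fin 3) R) 2 j - M.adjugate.trace * M 2 j + M.trace * (M ^ 2) 2 j := by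
      simp [thirdRowKrylov, cubicCompanion, mul_apply, Fin.sum_univ_three, sub_eq_add_neg]
    exact hlast.trans (by linear_combination -hCH)

lemma thirdRowKrylov_mulVec {M : Matrix (Fin 3) (Fin 3) R} (h20 : M 2 0 = 0) (v : Fin 3 → R) :
    (thirdRowKrylov M *ᵥ v) 0 = v 2 ∧
      (thirdRowKrylov M *ᵥ v) 1 = M 2 1 * v 1 + M 2 2 * v 2 := by
  simp [thirdRowKrylov, mulVec, dotProduct, Fin.sum_univ_three, h20, one_apply]

lemma det_thirdRowKrylov {M : Matrix (Fin 3) (Fin 3) R} (h20 : M 2 0 = 0) :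
    (thirdRowKrylov M).det = -(M 1 0 * M 2 1 ^ 2) := by
  simp [thirdRowKrylov, det_fin_three, h20, pow_two, mul_apply, Fin.sum_univ_three, one_apply]
  ring

end ThirdRow

section Window

lemma eventually_exists_cubic_factors (τ C : ℝ) :
    ∀ᶠ σ : ℝ in atTop, ∃ b c : ℝ, τ = b + c⁻¹ ∧ σ = c + b * c⁻¹ ∧ C ≤ c ∧ b ^ 2 ≤ c := by
  set c₀ : ℝ := max C ((|τ| + 1) ^ 2)
  have hc₀ : 1 ≤ c₀ := le_max_of_le_right (one_le_pow₀ (by linarith [abs_nonneg τ]))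
  let φ : ℝ → ℝ := fun c => c + (τ - c⁻¹) * c⁻¹
  have hcont : ContinuousOn φ (Set.Ici c₀) := by
    have hinv : ContinuousOn (fun c : ℝ => c⁻¹) (Set.Ici c₀) :=
      continuousOn_inv₀.mono fun c hc => (zero_lt_one.trans_le (hc₀.trans hc)).ne'
    fun_prop
  have htop : Tendsto φ atTop atTop :=
    tendsto_id.atTop_add <|
      (tendsto_const_nhds.sub tendsto_inv_atTop_zero).mul tendsto_inv_atTop_zero
  filter_upwards [eventually_ge_atTop (φ c₀)] with σ hσ
  obtain ⟨c, hc, rfl⟩ := intermediate_value_Ici hcont htop hσ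
  have hc1 : 1 ≤ c := hc₀.trans hc
  have hinv : |c⁻¹| ≤ 1 := by
    rw [abs_inv]
    exact inv_le_one_of_one_le₀ (hc1.trans (le_abs_self c))
  have hb : |τ - c⁻¹| ≤ |τ| + 1 := (abs_sub τ c⁻¹).trans (by gcongr)
  refine ⟨τ - c⁻¹, c, by ring, rfl, (le_max_left _ _).trans hc, ?_⟩
  calc (τ - c⁻¹) ^ 2 ≤ (|τ| + 1) ^ 2 := sq_le_sq' (abs_le.mp hb).1 (abs_le.mp hb).2
    _ ≤ c := (le_max_right _ _).trans hc

lemma abs_bounds_of_binaryForm_le {b c x y : ℝ} (hc : 256 ≤ c) (hb : b ^ 2 ≤ c)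
    (h : y ^ 2 - b * x * y + c * x ^ 2 ≤ c / 64) : |x| < 1 ∧ |y - b * x / 2| ≤ c / 16 := by
  have hsq : (y - b * x / 2) ^ 2 + (c - b ^ 2 / 4) * x ^ 2 ≤ c / 64 := by linarith
  have hx : c / 2 * x ^ 2 ≤ (c - b ^ 2 / 4) * x ^ 2 := by gcongr; linarith
  constructor
  · rw [← sq_lt_one_iff_abs_lt_one]
    nlinarith only [hsq, hx, hc, sq_nonneg (y - b * x / 2)]
  · have hx0 : 0 ≤ c / 2 * x ^ 2 := by positivity
    refine abs_le_of_sq_le_sq ?_ (by positivity)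
    nlinarith only [hsq, hx, hx0, hc]

lemma abs_lt_one_of_linearFactor_mem_window {b c : ℝ} {w : Fin 3 → ℝ} (hc : 256 ≤ c)
    (hb : b ^ 2 ≤ c) (hform : |linearFactor b c w * quadraticFactor c⁻¹ b c w| ≤ c / 256)
    (hlow : 1 / 4 ≤ |linearFactor b c w|) (hhigh : |linearFactor b c w| < c / 4) :
    |w 0| < 1 ∧ |w 1 - c⁻¹ * w 0| < 1 := by
  set L := linearFactor b c w with hL
  set Q := quadraticFactor c⁻¹ b c w
  let x := w 1 - c⁻¹ * w 0
  let y := w 2 - c⁻¹ * w 1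
  have hQle : Q ≤ c / 64 := by
    have hmul : 1 / 4 * |Q| ≤ c / 256 :=
      (mul_le_mul_of_nonneg_right hlow (abs_nonneg Q)).trans (abs_mul L Q ▸ hform)
    linarith [le_abs_self Q]
  obtain ⟨hx, hy⟩ := abs_bounds_of_binaryForm_le (x := x) (y := y) hc hb hQle
  refine ⟨?_, hx⟩
  have hinv0 : 0 < c⁻¹ := by positivity
  have hinv1 : c⁻¹ ≤ 1 := inv_le_one_of_one_le₀ (by linarith)
  have hb16 : |b| ≤ c / 16 := abs_le_of_sq_le_sq (by nlinarith) (by positivity)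
  set D := c - b * c⁻¹ + c⁻¹ ^ 2
  have hD : 3 / 4 * c ≤ D := by nlinarith [le_abs_self b]
  have hL_eq : w 0 * D = L - (y - b * x / 2) - (c⁻¹ - b / 2) * x := by
    simp only [hL, linearFactor, D, x, y]
    ring
  have hmid : |(c⁻¹ - b / 2) * x| ≤ 1 + c / 32 := by
    have hcoef : |c⁻¹ - b / 2| ≤ 1 + c / 32 := by
      rw [abs_le] at hb16 ⊢
      constructor <;> linarith
    rw [abs_mul]
    exact (mul_le_of_le_one_right (abs_nonneg _) hx.le).trans hcoef
  have hw0D : |w 0| * D < 1 * D := by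
    calc |w 0| * D = |w 0 * D| := by rw [abs_mul, abs_of_nonneg (by linarith : 0 ≤ D)]
      _ ≤ |L| + |y - b * x / 2| + |(c⁻¹ - b / 2) * x| := by
        rw [hL_eq]
        exact (abs_sub _ _).trans (by gcongr; exact abs_sub _ _)
      _ < 1 * D := by linarith
  exact lt_of_mul_lt_mul_right hw0D (by linarith)

lemma eq_zero_of_linearFactor_mem_window {b c : ℝ} {w : Fin 3 → ℤ} (hc : 256 ≤ c) (hb : b ^ 2 ≤ c)
    (hform : |linearFactor b c (Int.castRingHom ℝ ∘ w) *
      quadraticFactor c⁻¹ b c (Int.castRingHom ℝ ∘ w)| ≤ c / 256)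
    (hlow : 1 / 4 ≤ |linearFactor b c (Int.castRingHom ℝ ∘ w)|)
    (hhigh : |linearFactor b c (Int.castRingHom ℝ ∘ w)| < c / 4) : w 0 = 0 ∧ w 1 = 0 := by
  obtain ⟨h0, h1⟩ := abs_lt_one_of_linearFactor_mem_window hc hb hform hlow hhigh
  simp only [Function.comp_apply, eq_intCast] at h0 h1
  have hw0 : w 0 = 0 := by
    rw [← Int.abs_lt_one_iff]
    exact_mod_cast h0
  refine ⟨hw0, ?_⟩
  rw [hw0, Int.cast_zero, mul_zero, sub_zero] at h1
  rw [← Int.abs_lt_one_iff]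
  exact_mod_cast h1

lemma eventually_exists_zpow_mulVec_eq_zero (τ K : ℤ) :
    ∀ᶠ σ : ℤ in atTop, ∀ w : Fin 3 → ℤ, (krylovMatrix (cubicCompanion σ τ) w).det ≠ 0 →
      |(krylovMatrix (cubicCompanion σ τ) w).det| ≤ K →
        ∃ k : ℤ, (cubicCompanion σ τ ^ k *ᵥ w) 0 = 0 ∧ (cubicCompanion σ τ ^ k *ᵥ w) 1 = 0 := by
  filter_upwards [tendsto_intCast_atTop_atTop.eventually <|
    eventually_exists_cubic_factors τ (max 256 (256 * K))] with σ ⟨b, c, hτ, hσ, hcmax, hb⟩ w hw hwK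
  have hc : 256 ≤ c := (le_max_left _ _).trans hcmax
  have hcK : (K : ℝ) ≤ c / 256 := by linarith [(le_max_right _ _).trans hcmax]
  have hcinv : c * c⁻¹ = 1 := mul_inv_cancel₀ (by positivity)
  set A : M3 := cubicCompanion σ τ
  have hA : IsUnit A.det := by simp [A, det_cubicCompanion]
  let L : (Fin 3 → ℤ) → ℝ := fun v => linearFactor b c (Int.castRingHom ℝ ∘ v)
  let Q : (Fin 3 → ℤ) → ℝ := fun v => quadraticFactor c⁻¹ b c (Int.castRingHom ℝ ∘ v)
  have hform : ∀ v, ((krylovMatrix A v).det : ℝ) = -(L v * Q v) :=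
    map_det_krylovMatrix_cubicCompanion (Int.castRingHom ℝ) hcinv hσ hτ
  have hLA : ∀ v, L (A *ᵥ v) = c⁻¹ * L v :=
    linearFactor_map_cubicCompanion_mulVec (Int.castRingHom ℝ) hcinv hσ hτ
  have hLk := apply_zpow_mulVec hA (by positivity : c⁻¹ ≠ 0) hLA
  have hLw : L w ≠ 0 := by
    intro h
    have hzero := hform w
    rw [h, zero_mul, neg_zero] at hzero
    exact hw (by exact_mod_cast hzero)
  obtain ⟨k, hk, hk'⟩ := exists_mem_Ico_zpow (x := 4 * |L w|) (y := c) (by positivity) (by linarith)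
  have hck : 0 < c ^ k := by positivity
  have hLabs : |L (A ^ k *ᵥ w)| = |L w| / c ^ k := by
    rw [hLk, abs_mul, _root_.inv_zpow, abs_of_pos (by positivity), inv_mul_eq_div]
  refine ⟨k, eq_zero_of_linearFactor_mem_window hc hb ?_ ?_ ?_⟩
  · have hdet : |(krylovMatrix A (A ^ k *ᵥ w)).det| = |(krylovMatrix A w).det| := by
      rw [det_krylovMatrix_mulVec (Matrix.Commute.self_zpow A k), abs_mul,
        Int.isUnit_iff_abs_eq.mp (hA.det_zpow k), one_mul]
    rw [← abs_neg, ← hform]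
    exact_mod_cast hcK.trans' (by exact_mod_cast hdet.trans_le hwK)
  · change _ ≤ |L _|
    rw [hLabs, le_div_iff₀ hck]
    linarith
  · change |L _| < _
    rw [hLabs, div_lt_iff₀ hck]
    rw [zpow_add_one₀ (by positivity)] at hk'
    linarith

end Window

section Hessenberg

lemma eq_zero_of_eq_add_mul {a a' d x : ℤ} (ha : 0 ≤ a) (had : a < d) (ha' : 0 ≤ a') (had' : a' < d)
    (h : a = a' + x * d) : x = 0 := by
  have hmod : a' = a := by
    rw [← Int.emod_eq_of_lt ha had, h, Int.add_mul_emod_self_right, Int.emod_eq_of_lt ha' had']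
  have hxd : x * d = 0 := by linarith
  exact (mul_eq_zero.mp hxd).resolve_right (ha.trans_lt had).ne'

variable {M M' Y : M3}

lemma det_krylovMatrix_single_zero (h20 : M 2 0 = 0) :
    (krylovMatrix M (Pi.single 0 1)).det = HessComplexity M := by
  simp [krylovMatrix, HessComplexity, det_fin_three, h20, pow_two, mul_apply, Fin.sum_univ_three,
    one_apply]
  ring

lemma IntegerConjugate.refl (M : M3) : IntegerConjugate M M :=
  ⟨1, by simp, by simp⟩

lemma IntegerConjugate.symm (h : IntegerConjugate M M') : IntegerConjugate M' M := by
  obtain ⟨X, hX, rfl⟩ := h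
  have hXu : IsUnit X.det := Int.isUnit_iff.mpr hX
  refine ⟨X⁻¹, Int.isUnit_iff.mp (X.isUnit_nonsing_inv_det hXu), ?_⟩
  rw [X.nonsing_inv_nonsing_inv hXu, mul_assoc X M, X.nonsing_inv_mul_cancel_left _ hXu,
    X.nonsing_inv_mul_cancel_right _ hXu]

lemma IntegerConjugate.exists_intertwine (h : IntegerConjugate M M') :
    ∃ Y : M3, IsUnit Y.det ∧ M * Y = Y * M' := by
  obtain ⟨X, hX, rfl⟩ := h
  have hXu : IsUnit X.det := Int.isUnit_iff.mpr hX
  refine ⟨X⁻¹, X.isUnit_nonsing_inv_det hXu, ?_⟩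
  rw [mul_assoc X M, X.nonsing_inv_mul_cancel_left _ hXu]

lemma IsPerfectHessenberg.a21_pos (hM : IsPerfectHessenberg M) : 0 < M 1 0 :=
  hM.2.1.trans_lt hM.2.2.1

lemma IsPerfectHessenberg.a32_pos (hM : IsPerfectHessenberg M) : 0 < M 2 1 :=
  hM.2.2.2.1.trans_lt hM.2.2.2.2.1

lemma IsPerfectHessenberg.hessComplexity_pos (hM : IsPerfectHessenberg M) :
    0 < HessComplexity M :=
  mul_pos (pow_pos hM.a21_pos 2) hM.a32_pos

lemma eq_of_intertwine_unitriangular (hM : IsPerfectHessenberg M) (hM' : IsPerfectHessenberg M')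
    {x y z : ℤ} (h : M * !![1, x, y; 0, 1, z; 0, 0, 1] = !![1, x, y; 0, 1, z; 0, 0, 1] * M') :
    M = M' := by
  have hent := fun i j => congrFun (congrFun h i) j
  obtain ⟨h20, h00, h00', h01, h01', h11, h11'⟩ := hM
  obtain ⟨k20, k00, k00', k01, k01', k11, k11'⟩ := hM'
  have e00 : M 0 0 = M' 0 0 + x * M' 1 0 := by
    simpa [mul_apply, Fin.sum_univ_three, k20] using hent 0 0
  have e10 : M 1 0 = M' 1 0 := by
    simpa [mul_apply, Fin.sum_univ_three, k20] using hent 1 0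
  have e21 : M 2 1 = M' 2 1 := by
    simpa [mul_apply, Fin.sum_univ_three, h20] using hent 2 1
  have e01 : M 0 0 * x + M 0 1 = M' 0 1 + x * M' 1 1 + y * M' 2 1 := by
    simpa [mul_apply, Fin.sum_univ_three] using hent 0 1
  have e11 : M 1 0 * x + M 1 1 = M' 1 1 + z * M' 2 1 := by
    simpa [mul_apply, Fin.sum_univ_three] using hent 1 1
  rw [e10] at h00'
  rw [e21] at h01' h11'
  obtain rfl : x = 0 := eq_zero_of_eq_add_mul h00 h00' k00 k00' e00
  obtain rfl : z = 0 := eq_zero_of_eq_add_mul h11 h11' k11 k11' (by linarith)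
  obtain rfl : y = 0 := eq_zero_of_eq_add_mul h01 h01' k01 k01' (by linarith)
  have hone : (!![1, 0, 0; 0, 1, 0; 0, 0, 1] : M3) = 1 := by decide
  rwa [hone, mul_one, one_mul] at h

lemma eq_of_intertwine_of_col_zero_eq_single (hM : IsPerfectHessenberg M)
    (hM' : IsPerfectHessenberg M') (h : M * Y = Y * M') (hY : IsUnit Y.det) (h00 : Y 0 0 = 1)
    (h10 : Y 1 0 = 0) (h20 : Y 2 0 = 0) : M = M' := by
  have hent := fun i j => congrFun (congrFun h i) j
  have h21 : Y 2 1 = 0 := by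
    have e20 : Y 2 1 = 0 ∨ M' 1 0 = 0 := by
      simpa [mul_apply, Fin.sum_univ_three, h00, h10, h20, hM.1, hM'.1] using hent 2 0
    exact e20.resolve_right hM'.a21_pos.ne'
  have e10 : M 1 0 = Y 1 1 * M' 1 0 := by
    simpa [mul_apply, Fin.sum_univ_three, h00, h10, h20, hM'.1] using hent 1 0
  have e21 : M 2 1 * Y 1 1 = Y 2 2 * M' 2 1 := by
    simpa [mul_apply, Fin.sum_univ_three, h20, h21, hM.1] using hent 2 1
  have hdiag : IsUnit (Y 1 1) ∧ IsUnit (Y 2 2) := by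
    rw [← IsUnit.mul_iff]
    simpa [det_fin_three, h00, h10, h20, h21] using hY
  have h11 : Y 1 1 = 1 := by
    refine (Int.isUnit_iff.mp hdiag.1).resolve_right fun hneg => ?_
    rw [hneg] at e10
    linarith [hM.a21_pos, hM'.a21_pos]
  have h22 : Y 2 2 = 1 := by
    refine (Int.isUnit_iff.mp hdiag.2).resolve_right fun hneg => ?_
    rw [h11, hneg] at e21
    linarith [hM.a32_pos, hM'.a32_pos]
  have hY_eq : Y = !![1, Y 0 1, Y 0 2; 0, 1, Y 1 2; 0, 0, 1] := by
    rw [eta_fin_three Y, h00, h10, h20, h11, h21, h22]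
    rfl
  rw [hY_eq] at h
  exact eq_of_intertwine_unitriangular hM hM' h

lemma eq_of_intertwine_of_col_zero (hM : IsPerfectHessenberg M) (hM' : IsPerfectHessenberg M')
    (h : M * Y = Y * M') (hY : IsUnit Y.det) (h10 : Y 1 0 = 0) (h20 : Y 2 0 = 0) : M = M' := by
  have h00 : IsUnit (Y 0 0) := by
    have hdet : Y.det = Y 0 0 * (Y 1 1 * Y 2 2 - Y 1 2 * Y 2 1) := by
      rw [det_fin_three, h10, h20]
      ring
    exact isUnit_of_mul_isUnit_left (hdet ▸ hY)
  rcases Int.isUnit_iff.mp h00 with hpos | hneg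
  · exact eq_of_intertwine_of_col_zero_eq_single hM hM' h hY hpos h10 h20
  · exact eq_of_intertwine_of_col_zero_eq_single (Y := -Y) hM hM' (by simp [h])
      (by simpa [det_neg] using hY) (by simp [hneg]) (by simp [h10]) (by simp [h20])

lemma abs_det_krylovMatrix_of_intertwine (hdet : M.det = 1) (h20 : M 2 0 = 0) (h20' : M' 2 0 = 0)
    (h : M * Y = Y * M') (hY : IsUnit Y.det) :
    |(krylovMatrix (cubicCompanion M.adjugate.trace M.trace)
        ((thirdRowKrylov M * Y) *ᵥ Pi.single 0 1)).det| =
      |M 1 0 * M 2 1 ^ 2 * HessComplexity M'| := by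
  have hint : cubicCompanion M.adjugate.trace M.trace * (thirdRowKrylov M * Y) =
      thirdRowKrylov M * Y * M' := by
    rw [← mul_assoc, cubicCompanion_mul_thirdRowKrylov hdet, mul_assoc, h, mul_assoc]
  rw [det_krylovMatrix_mulVec hint, det_krylovMatrix_single_zero h20', det_mul,
    det_thirdRowKrylov h20, abs_mul, abs_mul, Int.isUnit_iff_abs_eq.mp hY, abs_neg, mul_one,
    ← abs_mul]

lemma eq_of_zpow_mulVec_eq_zero {k : ℤ} (hdet : M.det = 1) (hM : IsPerfectHessenberg M)
    (hM' : IsPerfectHessenberg M') (h : M * Y = Y * M') (hY : IsUnit Y.det)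
    (h0 : (cubicCompanion M.adjugate.trace M.trace ^ k *ᵥ
      ((thirdRowKrylov M * Y) *ᵥ Pi.single 0 1)) 0 = 0)
    (h1 : (cubicCompanion M.adjugate.trace M.trace ^ k *ᵥ
      ((thirdRowKrylov M * Y) *ᵥ Pi.single 0 1)) 1 = 0) : M = M' := by
  have hMu : IsUnit M.det := hdet ▸ isUnit_one
  have hpow : thirdRowKrylov M * M ^ k =
      cubicCompanion M.adjugate.trace M.trace ^ k * thirdRowKrylov M :=
    Matrix.SemiconjBy.zpow_right hMu (by simp [det_cubicCompanion])
      (cubicCompanion_mul_thirdRowKrylov hdet).symm k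
  have hcol : cubicCompanion M.adjugate.trace M.trace ^ k *ᵥ
      ((thirdRowKrylov M * Y) *ᵥ Pi.single 0 1) = thirdRowKrylov M *ᵥ (M ^ k * Y).col 0 := by
    rw [← mulVec_single_one, mulVec_mulVec, mulVec_mulVec, ← mul_assoc, ← mul_assoc, hpow]
  obtain ⟨hrow0, hrow1⟩ := thirdRowKrylov_mulVec hM.1 ((M ^ k * Y).col 0)
  rw [hcol, hrow0] at h0
  rw [hcol, hrow1, h0, mul_zero, add_zero] at h1
  have hint : M * (M ^ k * Y) = M ^ k * Y * M' := by
    rw [← mul_assoc, (Matrix.Commute.self_zpow M k).eq, mul_assoc, h, mul_assoc]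
  have hunit : IsUnit (M ^ k * Y).det := by
    rw [det_mul]
    exact (hMu.det_zpow k).mul hY
  exact eq_of_intertwine_of_col_zero hM hM' hint hunit
    ((mul_eq_zero.mp h1).resolve_left hM.a32_pos.ne') h0

lemma eventually_eq_of_hessComplexity_le (τ q : ℤ) :
    ∀ᶠ σ : ℤ in atTop, ∀ M M' : M3, M.det = 1 → IsPerfectHessenberg M → M.trace = τ →
      M.adjugate.trace = σ → M 1 0 * M 2 1 = q → IsPerfectHessenberg M' →
      IntegerConjugate M M' → HessComplexity M' ≤ HessComplexity M → M = M' := by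
  filter_upwards [eventually_exists_zpow_mulVec_eq_zero τ (q ^ 3)]
  rintro _ horbit M M' hdet hM rfl rfl rfl hM' hconj hle
  obtain ⟨Y, hY, h⟩ := hconj.exists_intertwine
  have hR : 0 < M 1 0 * M 2 1 ^ 2 := mul_pos hM.a21_pos (pow_pos hM.a32_pos 2)
  have hform := abs_det_krylovMatrix_of_intertwine hdet hM.1 hM'.1 h hY
  have hpos : 0 < M 1 0 * M 2 1 ^ 2 * HessComplexity M' := mul_pos hR hM'.hessComplexity_pos
  have hbound : M 1 0 * M 2 1 ^ 2 * HessComplexity M' ≤ (M 1 0 * M 2 1) ^ 3 := by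
    calc M 1 0 * M 2 1 ^ 2 * HessComplexity M' ≤ M 1 0 * M 2 1 ^ 2 * HessComplexity M :=
          mul_le_mul_of_nonneg_left hle hR.le
      _ = (M 1 0 * M 2 1) ^ 3 := by rw [HessComplexity]; ring
  rw [abs_of_pos hpos] at hform
  obtain ⟨k, h0, h1⟩ := horbit _ (abs_pos.mp (hform ▸ hpos)) (hform.trans_le hbound)
  exact eq_of_zpow_mulVec_eq_zero hdet hM hM' h hY h0 h1

lemma eventually_existsUnique_sigmaReduced (τ q : ℤ) :
    ∀ᶠ σ : ℤ in atTop, ∀ M : M3, M.det = 1 → IsPerfectHessenberg M → M.trace = τ →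
      M.adjugate.trace = σ → M 1 0 * M 2 1 = q →
      ∃! M' : M3, IntegerConjugate M M' ∧ SigmaReduced M' := by
  filter_upwards [eventually_eq_of_hessComplexity_le τ q] with σ hσ M hdet hM hτ hσM hq
  refine ⟨M, ⟨.refl M, hdet, hM, fun M' _ hM' hconj => ?_⟩, fun M' ⟨hconj, _, hM', hmin⟩ => ?_⟩
  · by_contra! hlt
    exact hlt.ne (congrArg HessComplexity (hσ M M' hdet hM hτ hσM hq hM' hconj hlt.le).symm)
  · exact (hσ M M' hdet hM hτ hσM hq hM' hconj (hmin M hdet hM hconj.symm)).symm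

end Hessenberg

section Ray

variable (a11 a12 a13 a21 a22 a23 a32 a33 m n : ℤ)

lemma det_Hmat : (Hmat a11 a12 a13 a21 a22 a23 a32 a33 m n).det =
    (Hmat a11 a12 a13 a21 a22 a23 a32 a33 0 0).det := by
  simp [Hmat, det_fin_three]
  ring

lemma trace_Hmat : (Hmat a11 a12 a13 a21 a22 a23 a32 a33 m n).trace =
    a11 + a22 + (a32 * n + a33) := by
  simp [Hmat, trace_fin_three]

lemma trace_adjugate_Hmat_sub (t : ℤ) :
    (Hmat a11 a12 a13 a21 a22 a23 a32 a33 (m - t) n).adjugate.trace =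
      (Hmat a11 a12 a13 a21 a22 a23 a32 a33 m n).adjugate.trace + t * (a21 * a32) := by
  simp [Hmat, trace_fin_three, adjugate_fin_three]
  ring

end Ray

theorem asymptotic_sigma_uniqueness_dir_neg_one_zero_general
    (a11 a12 a13 a21 a22 a23 a32 a33 m n : ℤ)
    (hdet : (Hmat a11 a12 a13 a21 a22 a23 a32 a33 0 0).det = 1)
    (h11 : 0 ≤ a11) (h1121 : a11 < a21)
    (h12 : 0 ≤ a12) (h1232 : a12 < a32)
    (h22 : 0 ≤ a22) (h2232 : a22 < a32) :
    ∃ T : ℤ, ∀ t : ℤ, T < t →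
      ∃! M' : M3,
        IntegerConjugate (Hmat a11 a12 a13 a21 a22 a23 a32 a33 (m - t) n) M' ∧
        SigmaReduced M' := by
  have hq : 0 < a21 * a32 := mul_pos (h11.trans_lt h1121) (h12.trans_lt h1232)
  have htendsto : Tendsto
      (fun t => (Hmat a11 a12 a13 a21 a22 a23 a32 a33 (m - t) n).adjugate.trace) atTop atTop := by
    simp only [trace_adjugate_Hmat_sub]
    exact tendsto_atTop_add_const_left _ _ (tendsto_id.atTop_mul_const' hq)
  obtain ⟨T, hT⟩ := eventually_atTop.mp <| htendsto.eventually <|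
    eventually_existsUnique_sigmaReduced (a11 + a22 + (a32 * n + a33)) (a21 * a32)
  exact ⟨T, fun t ht => hT t ht.le _ (by rw [det_Hmat, hdet])
    ⟨rfl, h11, h1121, h12, h1232, h22, h2232⟩ (trace_Hmat ..) rfl rfl⟩

end

/-- Along any NRS-ray of direction (−1,0), eventually every matrix of the ray has
exactly one integer conjugate ς-reduced matrix. -/
theorem asymptotic_sigma_uniqueness_dir_neg_one_zero
    (a11 a12 a13 a21 a22 a23 a32 a33 m n : ℤ)
    (hdet : (Hmat a11 a12 a13 a21 a22 a23 a32 a33 0 0).det = 1)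
    (h11 : 0 ≤ a11) (h1121 : a11 < a21)
    (h12 : 0 ≤ a12) (h1232 : a12 < a32)
    (h22 : 0 ≤ a22) (h2232 : a22 < a32)
    (hray : ∀ t : ℤ, 0 ≤ t →
      Irreducible
        ((Hmat a11 a12 a13 a21 a22 a23 a32 a33 (m - t) n).charpoly.map
          (Int.castRingHom ℚ)) ∧
      ∃ z : ℂ, z.im ≠ 0 ∧
        Polynomial.aeval z (Hmat a11 a12 a13 a21 a22 a23 a32 a33 (m - t) n).charpoly = 0) :
    ∃ T : ℤ, ∀ t : ℤ, T < t →
      ∃! M' : M3,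
        IntegerConjugate (Hmat a11 a12 a13 a21 a22 a23 a32 a33 (m - t) n) M' ∧
        SigmaReduced M' :=
  asymptotic_sigma_uniqueness_dir_neg_one_zero_general a11 a12 a13 a21 a22 a23 a32 a33 m n
    hdet h11 h1121 h12 h1232 h22 h2232
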